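/- Let 0 ≤ k < 1, let sn, cn, dn : ℝ → ℝ be differentiable functions satisfying sn' = cn·dn, cn' = −sn·dn, dn' = −k²·sn·cn with sn(0) = 0, cn(0) = 1, dn(0) = 1, and let K(k) and E(k) denote the complete elliptic integrals of the first and second kind. Then ∫_{u∈(0, 2K(k))} dn(u)² du = 2·E(k). -/

import Mathlib

/-!
The amplitude `am t = ∫₀ᵗ dn` satisfies `sin ∘ am = sn` and `cos ∘ am = cn`, and `dn² + k² sn² = 1`
with `dn > 0`, so `am' = dn = Δ ∘ am` where `Δ θ = √(1 - k² sin² θ)`. Hence the incomplete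
integral `F φ = ∫₀^φ 1/Δ` inverts `am`: `F (am t) = t`. Since `F π = 2K` by the symmetry
`θ ↦ π - θ` and `F` is strictly increasing, `am (2K) = π`. Substituting `θ = am u` gives
`∫₀^{2K} dn² = ∫₀^π Δ = 2E`.
-/

/-- The complete elliptic integral of the first kind. -/
noncomputable def ellipticK (k : ℝ) : ℝ :=
  ∫ θ in (0:ℝ)..(Real.pi / 2), 1 / Real.sqrt (1 - k ^ 2 * Real.sin θ ^ 2)

/-- The complete elliptic integral of the second kind. -/
noncomputable def ellipticE (k : ℝ) : ℝ :=
  ∫ θ in (0:ℝ)..(Real.pi / 2), Real.sqrt (1 - k ^ 2 * Real.sin θ ^ 2)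

/-- A continuous function symmetric about `π / 2` has integral over `[0, π]` twice that over
the first half. -/
lemma integral_zero_pi_of_symm (f : ℝ → ℝ) (hf : Continuous f)
    (hsymm : ∀ x, f (Real.pi - x) = f x) :
    ∫ x in (0:ℝ)..Real.pi, f x = 2 * ∫ x in (0:ℝ)..(Real.pi / 2), f x := by
  have h := intervalIntegral.integral_comp_sub_left (a := 0) (b := Real.pi / 2) f Real.pi
  simp only [hsymm, sub_zero, sub_half] at h
  rw [← intervalIntegral.integral_add_adjacent_intervals
    (hf.intervalIntegrable 0 (Real.pi / 2)) (hf.intervalIntegrable _ _), ← h]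
  ring

/-- The radicand of the elliptic integrals is positive for `0 ≤ k < 1`. -/
lemma one_sub_sq_mul_sin_sq_pos {k : ℝ} (hk0 : 0 ≤ k) (hk1 : k < 1) (x : ℝ) :
    0 < 1 - k ^ 2 * Real.sin x ^ 2 := by
  nlinarith [Real.sin_sq_le_one x, sq_nonneg (Real.sin x), sq_nonneg k]

/-- `∫₀^{2K(k)} dn(u)² du = 2 E(k)` for the Jacobi elliptic function `dn`. -/
theorem integral_dn_sq (k : ℝ) (hk0 : 0 ≤ k) (hk1 : k < 1)
    (sn cn dn : ℝ → ℝ)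
    (hsn : ∀ t : ℝ, HasDerivAt sn (cn t * dn t) t)
    (hcn : ∀ t : ℝ, HasDerivAt cn (-(sn t * dn t)) t)
    (hdn : ∀ t : ℝ, HasDerivAt dn (-(k ^ 2 * sn t * cn t)) t)
    (hsn0 : sn 0 = 0) (hcn0 : cn 0 = 1) (hdn0 : dn 0 = 1) :
    (∫ u in (0:ℝ)..(2 * ellipticK k), (dn u) ^ 2) = 2 * ellipticE k := by
  have hconst : ∀ g : ℝ → ℝ, (∀ t, HasDerivAt g 0 t) → ∀ t, g t = g 0 := fun g hg t =>
    is_const_of_deriv_eq_zero (fun x => (hg x).differentiableAt) (fun x => (hg x).deriv) t 0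
  have hdnc : Continuous dn := continuous_iff_continuousAt.2 fun t => (hdn t).continuousAt
  obtain ⟨am, ham⟩ : ∃ am : ℝ → ℝ, am = fun t => ∫ u in (0:ℝ)..t, dn u := ⟨_, rfl⟩
  have ham0 : am 0 = 0 := by simp [ham]
  have hamd : ∀ t, HasDerivAt am (dn t) t := fun t => by
    rw [ham]; exact (hdnc.integral_hasStrictDerivAt 0 t).hasDerivAt
  -- The squared distance from `(sn, cn)` to `(sin ∘ am, cos ∘ am)` is a conserved quantity.
  have hsin : ∀ t, sn t = Real.sin (am t) := by
    intro t
    have h := hconst (fun t => (sn t - Real.sin (am t)) ^ 2 + (cn t - Real.cos (am t)) ^ 2)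
      (fun t => by
        have := (((hsn t).sub (hamd t).sin).pow 2).add (((hcn t).sub (hamd t).cos).pow 2)
        refine this.congr_deriv ?_
        simp
        ring) t
    simp only [ham0, hsn0, hcn0, Real.sin_zero, Real.cos_zero, sub_self] at h
    nlinarith [sq_nonneg (sn t - Real.sin (am t)), sq_nonneg (cn t - Real.cos (am t))]
  have hsq : ∀ t, dn t ^ 2 = 1 - k ^ 2 * Real.sin (am t) ^ 2 := by
    intro t
    have h := hconst (fun t => dn t ^ 2 + k ^ 2 * sn t ^ 2)
      (fun t => by
        have := ((hdn t).pow 2).add (((hsn t).pow 2).const_mul (k ^ 2))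
        refine this.congr_deriv ?_
        simp
        ring) t
    simp only [hsn0, hdn0] at h
    rw [← hsin]
    linarith
  have hne : ∀ t, dn t ≠ 0 := fun t h0 => by
    have := one_sub_sq_mul_sin_sq_pos hk0 hk1 (am t)
    rw [← hsq, h0] at this
    norm_num at this
  have hpos : ∀ t, 0 < dn t := by
    intro t
    by_contra! hle
    obtain ⟨s, hs⟩ := mem_range_of_exists_le_of_exists_ge hdnc ⟨t, hle⟩
      ⟨0, by rw [hdn0]; exact zero_le_one⟩
    exact hne s hs
  have hdn_eq : ∀ t, dn t = Real.sqrt (1 - k ^ 2 * Real.sin (am t) ^ 2) := fun t => by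
    rw [← hsq, Real.sqrt_sq (hpos t).le]
  have hΔpos : ∀ x, 0 < Real.sqrt (1 - k ^ 2 * Real.sin x ^ 2) := fun x =>
    Real.sqrt_pos.2 (one_sub_sq_mul_sin_sq_pos hk0 hk1 x)
  have hΔc : Continuous fun x => Real.sqrt (1 - k ^ 2 * Real.sin x ^ 2) := by fun_prop
  have hΔic : Continuous fun x => 1 / Real.sqrt (1 - k ^ 2 * Real.sin x ^ 2) :=
    continuous_const.div hΔc fun x => (hΔpos x).ne'
  obtain ⟨F, hF⟩ : ∃ F : ℝ → ℝ,
      F = fun φ => ∫ x in (0:ℝ)..φ, 1 / Real.sqrt (1 - k ^ 2 * Real.sin x ^ 2) := ⟨_, rfl⟩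
  have hFd : ∀ φ, HasDerivAt F (1 / Real.sqrt (1 - k ^ 2 * Real.sin φ ^ 2)) φ := fun φ => by
    rw [hF]; exact (hΔic.integral_hasStrictDerivAt 0 φ).hasDerivAt
  have hFmono : StrictMono F := strictMono_of_hasDerivAt_pos hFd fun φ => one_div_pos.2 (hΔpos φ)
  have hFam : ∀ t, F (am t) = t := by
    intro t
    have h := hconst (fun t => F (am t) - t)
      (fun t => by
        refine (((hFd (am t)).comp t (hamd t)).sub (hasDerivAt_id t)).congr_deriv ?_
        rw [← hdn_eq, one_div_mul_cancel (hne t), sub_self]) t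
    have hF0 : F 0 = 0 := by simp [hF]
    simp only [ham0, hF0] at h
    linarith
  have hFpi : F Real.pi = 2 * ellipticK k := by
    rw [hF]
    exact integral_zero_pi_of_symm _ hΔic fun x => by rw [Real.sin_pi_sub]
  have hampi : am (2 * ellipticK k) = Real.pi := hFmono.injective (by rw [hFam, hFpi])
  have hsub := intervalIntegral.integral_comp_mul_deriv (a := 0) (b := 2 * ellipticK k)
    (fun x _ => hamd x) hdnc.continuousOn hΔc
  rw [ham0, hampi, integral_zero_pi_of_symm _ hΔc fun x => by rw [Real.sin_pi_sub]] at hsub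
  rw [ellipticE, ← hsub]
  refine intervalIntegral.integral_congr fun u _ => ?_
  simp only [Function.comp_apply]
  rw [← hdn_eq, sq]
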